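/- Let n ≥ 3 be an odd integer, K a number field of degree n with signature (r1, r2), and O an order in K. Let H⁺(O) be the subgroup of H(O) consisting of classes represented by pairs (I, δ) with δ totally positive. Then #H⁺(O) = 2^{r2} · #Cl₂⁺(O), where Cl₂⁺(O) is the 2-torsion subgroup of the narrow class group of O. -/

import Mathlib

set_option synthInstance.maxHeartbeats 1000000
set_option maxHeartbeats 1000000
open NumberField FractionalIdeal

variable (K : Type) [Field K] [NumberField K] (O : Subring K) [IsFractionRing O K]

/-- The group of pairs `(I, δ)` where `I` is an invertible fractional `O`-ideal in `K` and
`δ ∈ Kˣ` with `I² = δ·O` and `N_{K/ℚ}(δ) > 0`. -/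
noncomputable def HPairs : Subgroup ((FractionalIdeal (nonZeroDivisors O) K)ˣ × Kˣ) where
  carrier := {p | p.1 ^ 2 = toPrincipalIdeal O K p.2 ∧ 0 < Algebra.norm ℚ (p.2 : K)}
  one_mem' := by
    refine ⟨?_, ?_⟩
    · rw [Prod.fst_one, one_pow, Prod.snd_one, _root_.map_one]
    · rw [Prod.snd_one, Units.val_one, _root_.map_one]
      exact one_pos
  mul_mem' := by
    rintro a b ⟨ha1, ha2⟩ ⟨hb1, hb2⟩
    refine ⟨?_, ?_⟩
    · rw [Prod.fst_mul, mul_pow, ha1, hb1, Prod.snd_mul, _root_.map_mul]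
    · rw [Prod.snd_mul, Units.val_mul, _root_.map_mul]
      exact mul_pos ha2 hb2
  inv_mem' := by
    rintro a ⟨ha1, ha2⟩
    refine ⟨?_, ?_⟩
    · rw [Prod.fst_inv, inv_pow, ha1, Prod.snd_inv, _root_.map_inv]
    · rw [Prod.snd_inv]
      have h1 : Algebra.norm ℚ ((a.2 : K)) * Algebra.norm ℚ ((↑(a.2)⁻¹ : K)) = 1 := by
        rw [← _root_.map_mul, ← Units.val_mul, mul_inv_cancel, Units.val_one, _root_.map_one]
      have h2 : Algebra.norm ℚ ((↑(a.2)⁻¹ : K)) = (Algebra.norm ℚ ((a.2 : K)))⁻¹ :=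
        eq_inv_of_mul_eq_one_right h1
      rw [h2]
      exact inv_pos.mpr ha2

/-- The subgroup of pairs of the form `(κ·O, κ²)` for `κ ∈ Kˣ`; quotienting by it identifies
`(I, δ)` with `(κI, κ²δ)`. -/
noncomputable def EqvPairs : Subgroup ((FractionalIdeal (nonZeroDivisors O) K)ˣ × Kˣ) :=
  ((toPrincipalIdeal O K).prod (powMonoidHom 2)).range

/-- The group `H(O)` of equivalence classes of pairs `(I, δ)` with `I² = δ·O` and
`N(δ) > 0`, where `(I, δ) ∼ (κI, κ²δ)` for `κ ∈ Kˣ`. -/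
noncomputable abbrev HGroup : Type :=
  HPairs K O ⧸ Subgroup.comap (HPairs K O).subtype (EqvPairs K O)

variable {O} in
/-- The subgroup of totally positive units of `Kˣ`. -/
noncomputable def totPosUnits : Subgroup Kˣ where
  carrier := {u | ∀ φ : K →+* ℝ, 0 < φ u}
  one_mem' := by intro φ; rw [Units.val_one, _root_.map_one]; exact one_pos
  mul_mem' := by
    intro a b ha hb φ
    rw [Units.val_mul, _root_.map_mul]
    exact mul_pos (ha φ) (hb φ)
  inv_mem' := by
    intro a ha φ
    rw [Units.val_inv_eq_inv_val, map_inv₀]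
    exact inv_pos.mpr (ha φ)

/-- The subgroup `H⁺(O)` of `H(O)` consisting of classes represented by a pair `(I, δ)`
with `δ` totally positive. -/
noncomputable def HPlus : Subgroup (HGroup K O) :=
  haveI : (Subgroup.comap (HPairs K O).subtype (EqvPairs K O)).Normal :=
    Subgroup.normal_of_comm _
  Subgroup.map (QuotientGroup.mk' _)
    (Subgroup.comap (HPairs K O).subtype
      (Subgroup.comap (MonoidHom.snd ((FractionalIdeal (nonZeroDivisors O) K)ˣ) Kˣ)
        (totPosUnits K)))

/-- The narrow class group of the order `O`: the quotient of the group of invertible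
fractional `O`-ideals in `K` by principal fractional ideals with totally positive generator. -/
noncomputable abbrev NarrowClassGroupOrd : Type :=
  (FractionalIdeal (nonZeroDivisors O) K)ˣ ⧸
    Subgroup.map (toPrincipalIdeal O K) (totPosUnits K)

/-!
Let `f : G →* J` be a homomorphism of commutative groups, `T ≤ G` a subgroup containing all `m`-th
powers, `P` the group of pairs `(I, x)` with `x ∈ T` and `I ^ m = f x`, and `E ≤ P` the group of the
pairs `(f y, y ^ m)`. Sending `(I, x)` to the class of `I` maps `P` onto the `m`-torsion of
`J / f(T)`, and comparing the kernel of this map with `E` gives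
`[P : E] · [G : T] = [ker f : (ker f) ^ m] · #(J / f(T))[m]`.

For `G = Kˣ`, `J` the invertible fractional ideals of `O`, `T` the totally positive elements and
`m = 2`, the index `[P : E]` is `#H⁺(O)`, since a totally positive element has positive norm. Weak
approximation gives `[G : T] = 2 ^ r₁`. The kernel of `f` is `Oˣ`, which has finite index in the
units of the maximal order because of the conductor, so `[Oˣ : (Oˣ)²] = 2 ^ (r₁ + r₂)` by
Dirichlet's unit theorem, and `2 ^ r₁` cancels.
-/

section AddGroup

variable {A B : Type*} [AddCommGroup A] [AddGroup B]

theorem relIndex_map_range_mul_card_ker (f : A →+ B) (S : AddSubgroup A) :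
    (S.map f).relIndex f.range * Nat.card f.ker =
      S.index * Nat.card (S ⊓ f.ker : AddSubgroup A) := by
  have hker : Nat.card (S ⊓ f.ker : AddSubgroup A) * S.relIndex f.ker = Nat.card f.ker := by
    simpa only [AddSubgroup.relIndex_bot_left, AddSubgroup.inf_relIndex_right] using
      AddSubgroup.relIndex_mul_relIndex ⊥ (S ⊓ f.ker) f.ker bot_le inf_le_right
  rw [AddMonoidHom.range_eq_map, AddSubgroup.relIndex_map_map, top_sup_eq,
    AddSubgroup.relIndex_top_right, ← hker,
    ← AddSubgroup.relIndex_mul_index (le_sup_left : S ≤ S ⊔ f.ker),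
    AddSubgroup.relIndex_sup_left]
  ring

theorem isTorsion_quotient_of_finiteIndex (S : AddSubgroup A) [S.FiniteIndex] :
    Module.IsTorsion ℤ (A ⧸ S.toIntSubmodule) := by
  intro q
  obtain ⟨a, rfl⟩ := Submodule.Quotient.mk_surjective _ q
  refine ⟨⟨S.index, mem_nonZeroDivisors_of_ne_zero ?_⟩, ?_⟩
  · exact_mod_cast AddSubgroup.FiniteIndex.index_ne_zero (H := S)
  · rw [Submonoid.mk_smul, natCast_zsmul, ← Submodule.Quotient.mk_smul,
      Submodule.Quotient.mk_eq_zero]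
    exact S.nsmul_index_mem a

theorem finrank_eq_of_finiteIndex (S : AddSubgroup A) [S.FiniteIndex] :
    Module.finrank ℤ S = Module.finrank ℤ A := by
  have hrank := Submodule.rank_quotient_add_rank S.toIntSubmodule
  rw [Module.rank_eq_zero_iff_isTorsion.mpr (isTorsion_quotient_of_finiteIndex S),
    zero_add] at hrank
  exact congrArg Cardinal.toNat hrank

variable (A) in
theorem exists_finiteIndex_isAddTorsionFree [Module.Finite ℤ A] :
    ∃ S : AddSubgroup A, S.FiniteIndex ∧ IsAddTorsionFree S := by
  have : AddGroup.FG A := Module.Finite.iff_addGroup_fg.mp ‹_›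
  have : Finite (Submodule.torsion ℤ A) :=
    Module.finite_of_fg_torsion _ Submodule.torsion_isTorsion
  set e := Nat.card (Submodule.torsion ℤ A)
  have he : e ≠ 0 := Nat.card_pos.ne'
  refine ⟨(nsmulAddMonoidHom e).range,
    AddSubgroup.finiteIndex_range_nsmulAddMonoidHom_of_fg A he, ?_⟩
  refine IsAddTorsionFree.of_not_isOfFinAddOrder ?_
  rintro ⟨_, y, rfl⟩ hne hfin
  obtain ⟨n, hn, hny⟩ := isOfFinAddOrder_iff_nsmul_eq_zero.mp hfin
  have hny : n • e • y = 0 := congrArg Subtype.val hny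
  have hy : y ∈ Submodule.torsion ℤ A := by
    refine ⟨⟨(n * e : ℕ), mem_nonZeroDivisors_of_ne_zero (by positivity)⟩, ?_⟩
    rwa [Submonoid.mk_smul, natCast_zsmul, mul_nsmul']
  have hey : e • y = 0 :=
    congrArg Subtype.val (card_nsmul_eq_zero' (x := (⟨y, hy⟩ : Submodule.torsion ℤ A)))
  exact hne (Subtype.ext hey)

theorem index_range_nsmulAddMonoidHom [Module.Finite ℤ A] {m : ℕ} (hm : m ≠ 0) :
    (nsmulAddMonoidHom m : A →+ A).range.index =
      m ^ Module.finrank ℤ A * Nat.card (nsmulAddMonoidHom m : A →+ A).ker := by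
  obtain ⟨S, hfin, htf⟩ := exists_finiteIndex_isAddTorsionFree A
  have : IsAddTorsionFree S.toIntSubmodule := htf
  set f : A →+ A := nsmulAddMonoidHom m
  have hinf : S ⊓ f.ker = ⊥ := by
    rw [AddSubgroup.eq_bot_iff_forall]
    rintro x ⟨hxS, hx⟩
    have hmx : m • (⟨x, hxS⟩ : S) = 0 := Subtype.ext hx
    exact congrArg Subtype.val ((smul_eq_zero_iff_right hm).mp hmx)
  have hle : S.map f ≤ S := by
    rintro _ ⟨x, hx, rfl⟩
    exact S.nsmul_mem hx m
  have hS : 0 < S.index := Nat.pos_of_ne_zero AddSubgroup.FiniteIndex.index_ne_zero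
  refine Nat.eq_of_mul_eq_mul_right hS ?_
  calc f.range.index * S.index
      = (S.map f).relIndex f.range * f.range.index * Nat.card f.ker := by
        rw [mul_right_comm, relIndex_map_range_mul_card_ker, hinf, AddSubgroup.card_bot, mul_one,
          mul_comm]
    _ = (S.map f).relIndex S * S.index * Nat.card f.ker := by
        rw [AddSubgroup.relIndex_mul_index (AddSubgroup.map_le_range f S),
          AddSubgroup.relIndex_mul_index hle]
    _ = m ^ Module.finrank ℤ A * Nat.card f.ker * S.index := by
        rw [AddSubgroup.relIndex_map_nsmul, finrank_eq_of_finiteIndex, mul_right_comm]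

theorem finrank_eq_of_injective_of_finiteIndex_range {A B : Type*} [AddCommGroup A]
    [AddCommGroup B] {f : A →+ B} (hf : Function.Injective f) [f.range.FiniteIndex] :
    Module.finrank ℤ A = Module.finrank ℤ B := by
  rw [← finrank_eq_of_finiteIndex f.range]
  exact (AddMonoidHom.ofInjective hf).toIntLinearEquiv.finrank_eq

end AddGroup

section Pairs

variable {G J : Type*} [CommGroup G] [CommGroup J]

/-- The group of pairs `(I, x)` with `x ∈ T` and `I ^ m = f x`. For `f` the map taking a unit of a
field to the fractional ideal it generates, `T` the totally positive elements and `m = 2`, the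
classes of these pairs make up `H⁺(O)`. -/
def powPairs (f : G →* J) (T : Subgroup G) (m : ℕ) : Subgroup (J × G) :=
  ((powMonoidHom m).comp (MonoidHom.fst J G)).eqLocus (f.comp (MonoidHom.snd J G)) ⊓
    T.comap (MonoidHom.snd J G)

variable {f : G →* J} {T : Subgroup G} {m : ℕ}

theorem range_prod_powMonoidHom_le_powPairs (hT : ∀ x, x ^ m ∈ T) :
    (f.prod (powMonoidHom m)).range ≤ powPairs f T m := by
  rintro _ ⟨x, rfl⟩
  exact ⟨(map_pow f x m).symm, hT x⟩

variable (f T) in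
/-- The class of the first component of a pair `(I, x)` modulo the image of `T`, defined on all of
`J × G` so that its kernel can be compared with subgroups of `J × G`. -/
def powPairsClass : J × G →* J ⧸ T.map f :=
  (QuotientGroup.mk' (T.map f)).comp (MonoidHom.fst J G)

theorem mem_ker_powPairsClass {p : J × G} : p ∈ (powPairsClass f T).ker ↔ p.1 ∈ T.map f :=
  QuotientGroup.eq_one_iff p.1

theorem map_powPairsClass_powPairs :
    (powPairs f T m).map (powPairsClass f T) = (powMonoidHom m).ker := by
  ext c
  obtain ⟨I, rfl⟩ := QuotientGroup.mk_surjective c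
  constructor
  · rintro ⟨p, hp, hpI⟩
    rw [← hpI, MonoidHom.mem_ker, powMonoidHom_apply, ← map_pow]
    exact mem_ker_powPairsClass.mpr ⟨p.2, hp.2, hp.1.symm⟩
  · intro hI
    obtain ⟨x, hx, hxI⟩ := (QuotientGroup.eq_one_iff (I ^ m)).mp hI
    exact ⟨(I, x), ⟨hxI.symm, hx⟩, rfl⟩

theorem relIndex_ker_powPairsClass_range :
    (powPairsClass f T).ker.relIndex (f.prod (powMonoidHom m)).range = (T ⊔ f.ker).index := by
  rw [← Subgroup.index_comap, ← Subgroup.comap_map_eq]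
  congr 1
  ext x
  exact mem_ker_powPairsClass

theorem comap_inr_range_prod :
    (f.prod (powMonoidHom m)).range.comap (MonoidHom.inr J G) = f.ker.map (powMonoidHom m) := by
  ext x
  constructor
  · rintro ⟨y, hy⟩
    exact ⟨y, congrArg Prod.fst hy, congrArg Prod.snd hy⟩
  · rintro ⟨y, hy, hyx⟩
    exact ⟨y, Prod.ext hy hyx⟩

theorem range_sup_ker_powPairsClass_inf (hT : ∀ x, x ^ m ∈ T) :
    (f.prod (powMonoidHom m)).range ⊔ ((powPairsClass f T).ker ⊓ powPairs f T m) =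
      (f.prod (powMonoidHom m)).range ⊔ (T ⊓ f.ker).map (MonoidHom.inr J G) := by
  refine le_antisymm (sup_le le_sup_left ?_) (sup_le_sup_left ?_ _)
  · rintro ⟨I, x⟩ ⟨hI, hIx, hx⟩
    obtain ⟨y, -, rfl⟩ := mem_ker_powPairsClass.mp hI
    have hfx : f y ^ m = f x := hIx
    have hsplit : (f y, x) = (f.prod (powMonoidHom m)) y * MonoidHom.inr J G ((y ^ m)⁻¹ * x) := by
      simp
    rw [hsplit]
    refine Subgroup.mul_mem_sup ⟨y, rfl⟩ ⟨_, ⟨T.mul_mem (T.inv_mem (hT y)) hx, ?_⟩, rfl⟩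
    simp [hfx]
  · rintro _ ⟨u, ⟨huT, hu⟩, rfl⟩
    exact ⟨mem_ker_powPairsClass.mpr (one_mem _), (one_pow m).trans hu.symm, huT⟩

theorem relIndex_range_ker_powPairsClass_inf (hT : ∀ x, x ^ m ∈ T) :
    (f.prod (powMonoidHom m)).range.relIndex ((powPairsClass f T).ker ⊓ powPairs f T m) =
      (f.ker.map (powMonoidHom m)).relIndex (T ⊓ f.ker) := by
  rw [← Subgroup.relIndex_sup_left, range_sup_ker_powPairsClass_inf hT, Subgroup.relIndex_sup_left,
    ← Subgroup.relIndex_comap, comap_inr_range_prod]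

theorem relIndex_range_powPairs_mul_index (hT : ∀ x, x ^ m ∈ T) :
    (f.prod (powMonoidHom m)).range.relIndex (powPairs f T m) * T.index =
      (f.ker.map (powMonoidHom m)).relIndex f.ker *
        Nat.card (powMonoidHom m : J ⧸ T.map f →* J ⧸ T.map f).ker := by
  set P := powPairs f T m
  set E := (f.prod (powMonoidHom m)).range
  set N := (powPairsClass f T).ker
  have hpow : f.ker.map (powMonoidHom m) ≤ T ⊓ f.ker := by
    rintro _ ⟨x, hx, rfl⟩
    exact ⟨hT x, f.ker.pow_mem hx m⟩
  calc E.relIndex P * T.index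
      = (N.relIndex (E ⊓ P) * E.relIndex P) * T.relIndex f.ker := by
        rw [inf_eq_left.mpr (range_prod_powMonoidHom_le_powPairs hT),
          relIndex_ker_powPairsClass_range,
          ← Subgroup.relIndex_mul_index (le_sup_left : T ≤ T ⊔ f.ker), Subgroup.relIndex_sup_left]
        ring
    _ = (E.relIndex (N ⊓ P) * N.relIndex P) * T.relIndex f.ker := by
        rw [Subgroup.relIndex_inf_mul_relIndex, Subgroup.relIndex_inf_mul_relIndex, inf_comm]
    _ = (f.ker.map (powMonoidHom m)).relIndex (T ⊓ f.ker) * (T ⊓ f.ker).relIndex f.ker *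
          N.relIndex P := by
        rw [relIndex_range_ker_powPairsClass_inf hT, Subgroup.inf_relIndex_right]
        ring
    _ = (f.ker.map (powMonoidHom m)).relIndex f.ker *
          Nat.card (powMonoidHom m : J ⧸ T.map f →* J ⧸ T.map f).ker := by
        rw [Subgroup.relIndex_mul_relIndex _ _ _ hpow inf_le_right, Subgroup.relIndex_ker,
          map_powPairsClass_powPairs]

end Pairs

section Conductor

variable {R S : Type*} [CommRing R] [CommRing S] [Algebra R S]

theorem exists_ne_zero_forall_smul_mem_range (F : Type*) [Field F] [Algebra R F]
    [Algebra S F] [IsScalarTower R S F] [IsFractionRing R F] [FaithfulSMul S F]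
    [Module.Finite R S] :
    ∃ b : R, b ≠ 0 ∧ ∀ x : S, b • x ∈ Set.range (algebraMap R S) := by
  have : Nontrivial R := (algebraMap R F).domain_nontrivial
  obtain ⟨s, hs⟩ : (⊤ : Submodule R S).FG := Module.Finite.fg_top
  obtain ⟨b, hb⟩ := IsLocalization.exist_integer_multiples (nonZeroDivisors R) s (algebraMap S F)
  refine ⟨b, nonZeroDivisors.ne_zero b.2, fun x ↦ ?_⟩
  suffices hle : ⊤ ≤ (LinearMap.range (Algebra.linearMap R S)).comap (LinearMap.lsmul R S b) from
    hle (Submodule.mem_top : x ∈ ⊤)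
  rw [← hs, Submodule.span_le]
  intro y hy
  obtain ⟨a, ha⟩ := hb y hy
  refine ⟨a, FaithfulSMul.algebraMap_injective S F ?_⟩
  rw [Algebra.linearMap_apply, ← IsScalarTower.algebraMap_apply, ha, LinearMap.lsmul_apply,
    Algebra.smul_def, Algebra.smul_def, map_mul, ← IsScalarTower.algebraMap_apply]

theorem finiteIndex_range_units_map_algebraMap [FaithfulSMul R S] {I : Ideal S} [Finite (S ⧸ I)]
    (hI : (I : Set S) ⊆ Set.range (algebraMap R S)) :
    (Units.map (algebraMap R S : R →* S)).range.FiniteIndex := by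
  have hrange : ∀ u ∈ (Units.map (Ideal.Quotient.mk I : S →* S ⧸ I)).ker,
      (u : S) ∈ (algebraMap R S).range := by
    intro u hu
    have hmem : (u : S) - 1 ∈ I :=
      (Ideal.Quotient.mk_eq_mk_iff_sub_mem _ _).mp (congrArg Units.val hu)
    simpa using add_mem (show (u : S) - 1 ∈ (algebraMap R S).range from hI hmem) (one_mem _)
  refine Subgroup.finiteIndex_of_le (H := (Units.map (Ideal.Quotient.mk I : S →* S ⧸ I)).ker) ?_
  intro u hu
  obtain ⟨a, ha⟩ := hrange u hu
  obtain ⟨a', ha'⟩ := hrange u⁻¹ (inv_mem hu)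
  have haa' : a * a' = 1 := FaithfulSMul.algebraMap_injective R S <| by
    rw [map_mul, ha, ha', Units.mul_inv, map_one]
  exact ⟨Units.mkOfMulEqOne a a' haa', Units.ext ha⟩

end Conductor

section Dirichlet

theorem ker_toPrincipalIdeal (R F : Type*) [CommRing R] [Field F] [Algebra R F]
    [IsFractionRing R F] :
    (toPrincipalIdeal R F).ker = (Units.map (algebraMap R F : R →* F)).range := by
  have : IsDomain R := (IsFractionRing.injective R F).isDomain
  ext x
  rw [MonoidHom.mem_ker, toPrincipalIdeal_eq_iff, Units.val_one, ← spanSingleton_one, eq_comm,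
    spanSingleton_eq_spanSingleton]
  refine exists_congr fun u ↦ ?_
  rw [Units.ext_iff, Units.smul_def, Algebra.smul_def, mul_one]
  rfl

theorem card_ker_powMonoidHom_two_units (R : Type*) [CommRing R] [IsDomain R] [CharZero R] :
    Nat.card (powMonoidHom 2 : Rˣ →* Rˣ).ker = 2 :=
  have hneg : IsPrimitiveRoot (-1 : R) 2 := .neg_one 0 two_ne_zero.symm
  hneg.card_rootsOfUnity

variable (R F : Type*) [CommRing R] [Field F] [NumberField F] [Algebra R F] [IsFractionRing R F]

theorem finiteIndex_range_units_map_ringOfIntegers [Algebra R (𝓞 F)] [IsScalarTower R (𝓞 F) F] :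
    (Units.map (algebraMap R (𝓞 F) : R →* 𝓞 F)).range.FiniteIndex := by
  have : Module.Finite R (𝓞 F) := .of_restrictScalars_finite ℤ R (𝓞 F)
  have : FaithfulSMul R (𝓞 F) := .tower_bot R (𝓞 F) F
  obtain ⟨b, hb, hbS⟩ := exists_ne_zero_forall_smul_mem_range (R := R) (S := 𝓞 F) F
  have hbI : Ideal.span {algebraMap R (𝓞 F) b} ≠ ⊥ := by simpa using hb
  have := Ideal.finiteQuotientOfFreeOfNeBot _ hbI
  refine finiteIndex_range_units_map_algebraMap (I := Ideal.span {algebraMap R (𝓞 F) b}) ?_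
  intro y hy
  obtain ⟨x, rfl⟩ := Ideal.mem_span_singleton.mp hy
  simpa only [Algebra.smul_def] using hbS x

variable [Module.Finite ℤ R]

theorem exists_injective_finiteIndex_range_ringOfIntegers_units :
    ∃ f : Rˣ →* (𝓞 F)ˣ, Function.Injective f ∧ f.range.FiniteIndex := by
  let φ : R →ₐ[ℤ] 𝓞 F := IsIntegralClosure.lift ℤ (𝓞 F) F
  let : Algebra R (𝓞 F) := φ.toRingHom.toAlgebra
  have : IsScalarTower R (𝓞 F) F :=
    .of_algebraMap_eq fun x ↦ (IsIntegralClosure.algebraMap_lift ℤ (𝓞 F) F x).symm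
  have : FaithfulSMul R (𝓞 F) := .tower_bot R (𝓞 F) F
  exact ⟨Units.map (algebraMap R (𝓞 F) : R →* 𝓞 F),
    Units.map_injective (FaithfulSMul.algebraMap_injective R (𝓞 F)),
    finiteIndex_range_units_map_ringOfIntegers R F⟩

theorem finrank_additive_units : Module.finrank ℤ (Additive Rˣ) = Units.rank F := by
  obtain ⟨f, hf, hfin⟩ := exists_injective_finiteIndex_range_ringOfIntegers_units R F
  have : f.toAdditive.range.FiniteIndex := ⟨hfin.index_ne_zero⟩
  rw [← Units.finrank_eq F]
  exact finrank_eq_of_injective_of_finiteIndex_range (f := f.toAdditive) hf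

theorem index_range_powMonoidHom_two_units :
    (powMonoidHom 2 : Rˣ →* Rˣ).range.index = 2 ^ Fintype.card (InfinitePlace F) := by
  obtain ⟨f, hf, -⟩ := exists_injective_finiteIndex_range_ringOfIntegers_units R F
  have : Module.Finite ℤ (Additive Rˣ) := .of_injective f.toAdditive.toIntLinearMap hf
  have : IsDomain R := (IsFractionRing.injective R F).isDomain
  have : CharZero R :=
    ((algebraMap R F).charZero_iff (IsFractionRing.injective R F)).mpr inferInstance
  have hindex := index_range_nsmulAddMonoidHom (A := Additive Rˣ) two_ne_zero
  rw [finrank_additive_units R F] at hindex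
  calc (powMonoidHom 2 : Rˣ →* Rˣ).range.index
      = 2 ^ Units.rank F * Nat.card (powMonoidHom 2 : Rˣ →* Rˣ).ker := hindex
    _ = 2 ^ Fintype.card (InfinitePlace F) := by
      rw [card_ker_powMonoidHom_two_units, ← pow_succ, Units.rank,
        Nat.sub_add_cancel Fintype.card_pos]

theorem relIndex_map_powMonoidHom_ker_toPrincipalIdeal :
    ((toPrincipalIdeal R F).ker.map (powMonoidHom 2)).relIndex (toPrincipalIdeal R F).ker =
      2 ^ Fintype.card (InfinitePlace F) := by
  let e : Rˣ ≃* (Units.map (algebraMap R F : R →* F)).range :=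
    MonoidHom.ofInjective (Units.map_injective (IsFractionRing.injective R F))
  rw [ker_toPrincipalIdeal, Subgroup.relIndex, Subgroup.subgroupOf_map_powMonoidHom_eq_range,
    ← e.map_range_powMonoidHom, Subgroup.index_map_equiv, index_range_powMonoidHom_two_units R F]

end Dirichlet

section RealSigns

variable {F : Type*} [Field F]

theorem surjective_embedding_of_isReal : Function.Surjective
    fun w : {w : InfinitePlace F // w.IsReal} ↦ InfinitePlace.embedding_of_isReal w.2 := by
  intro φ
  have hφ : ComplexEmbedding.IsReal (Complex.ofRealHom.comp φ) :=
    RingHom.ext fun x ↦ Complex.conj_ofReal (φ x)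
  refine ⟨⟨_, _, hφ, rfl⟩, RingHom.ext fun x ↦ Complex.ofReal_injective ?_⟩
  rw [InfinitePlace.embedding_of_isReal_apply, InfinitePlace.embedding_mk_eq_of_isReal hφ]
  rfl

theorem signTypeUnits_eq_one_or_neg_one : ∀ s : SignTypeˣ, s = 1 ∨ s = -1 := by
  decide

theorem sign_eq_of_abs_sub_lt_one {s : SignTypeˣ} {y : ℝ} (h : |y - (s : SignType)| < 1) :
    SignType.sign y = s := by
  rw [abs_lt] at h
  rcases signTypeUnits_eq_one_or_neg_one s with rfl | rfl
  · simp only [Units.val_one, SignType.coe_one] at h ⊢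
    exact sign_pos (by linarith)
  · simp only [Units.val_neg, Units.val_one, SignType.coe_neg, SignType.coe_one] at h ⊢
    exact sign_neg (by linarith)

variable (F) in
/-- The signs of a nonzero element of a field at its real places. The kernel of this homomorphism
is the group of totally positive elements. -/
noncomputable def realSigns : Fˣ →* ({w : InfinitePlace F // w.IsReal} → SignTypeˣ) :=
  MonoidHom.pi fun w ↦ (Units.map (signHom : ℝ →*₀ SignType).toMonoidHom).comp
    (Units.map (InfinitePlace.embedding_of_isReal w.2).toMonoidHom)

theorem coe_realSigns_apply (x : Fˣ) (w : {w : InfinitePlace F // w.IsReal}) :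
    (realSigns F x w : SignType) = SignType.sign (InfinitePlace.embedding_of_isReal w.2 (x : F)) :=
  rfl

theorem mem_ker_realSigns {x : Fˣ} : x ∈ (realSigns F).ker ↔ ∀ φ : F →+* ℝ, 0 < φ x := by
  rw [surjective_embedding_of_isReal.forall, MonoidHom.mem_ker, funext_iff]
  refine forall_congr' fun w ↦ ?_
  rw [← sign_eq_one_iff, ← coe_realSigns_apply, Pi.one_apply, Units.ext_iff, Units.val_one]

variable [NumberField F]

theorem exists_forall_infinitePlace_sub_lt (s : InfinitePlace F → F) {ε : ℝ} (hε : 0 < ε) :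
    ∃ x : F, ∀ w : InfinitePlace F, w (x - s w) < ε := by
  obtain ⟨x, hx⟩ := (InfinitePlace.denseRange_algebraMap_pi F).exists_dist_lt
    (fun w ↦ WithAbs.toAbs w.1 (s w)) hε
  refine ⟨x, fun w ↦ ?_⟩
  have hw := (dist_pi_lt_iff hε).mp hx w
  rwa [dist_comm, dist_eq_norm] at hw

theorem surjective_realSigns : Function.Surjective (realSigns F) := by
  intro s
  let t : InfinitePlace F → SignTypeˣ := Function.extend Subtype.val s 1
  obtain ⟨x, hx⟩ := exists_forall_infinitePlace_sub_lt (fun w ↦ ((t w : SignType) : F)) one_pos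
  have hx₀ : x ≠ 0 := by
    rintro rfl
    obtain ⟨w⟩ : Nonempty (InfinitePlace F) := inferInstance
    refine (hx w).ne ?_
    rw [← w.norm_embedding_eq]
    rcases signTypeUnits_eq_one_or_neg_one (t w) with h | h <;> simp [h]
  refine ⟨Units.mk0 x hx₀, funext fun w ↦ Units.ext ?_⟩
  have ht : t w = s w := Subtype.val_injective.extend_apply s 1 w
  rw [coe_realSigns_apply]
  refine sign_eq_of_abs_sub_lt_one ?_
  calc |InfinitePlace.embedding_of_isReal w.2 x - (s w : SignType)|
      = w.1 (x - (t w : SignType)) := by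
        rw [← InfinitePlace.norm_embedding_of_isReal w.2, map_sub, Real.norm_eq_abs, ht]
        rcases signTypeUnits_eq_one_or_neg_one (s w) with h | h <;> simp [h]
    _ < 1 := hx w

theorem index_ker_realSigns : (realSigns F).ker.index = 2 ^ InfinitePlace.nrRealPlaces F := by
  classical
  have hcard : Fintype.card SignTypeˣ = 2 := by decide
  rw [Subgroup.index_ker, MonoidHom.range_eq_top.mpr surjective_realSigns, Subgroup.card_top,
    Nat.card_fun, Nat.card_eq_fintype_card, Nat.card_eq_fintype_card, hcard]

end RealSigns

section Norm

open scoped ComplexOrder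

variable {F : Type*} [Field F] [NumberField F] {x : F}

open scoped Classical in
theorem filter_infinitePlaceMk_eq (w : InfinitePlace F) :
    ({φ | InfinitePlace.mk φ = w} : Finset (F →+* ℂ)) =
      {w.embedding, ComplexEmbedding.conjugate w.embedding} := by
  ext φ
  rw [Finset.mem_filter_univ, Finset.mem_insert, Finset.mem_singleton, ← w.mk_embedding,
    InfinitePlace.mk_eq_iff, w.mk_embedding, ComplexEmbedding.involutive_conjugate F |>.eq_iff]

open scoped Classical in
theorem prod_filter_infinitePlaceMk_eq_pos (hx₀ : x ≠ 0) (hx : ∀ φ : F →+* ℝ, 0 < φ x)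
    (w : InfinitePlace F) : 0 < ∏ φ with InfinitePlace.mk φ = w, φ x := by
  rw [filter_infinitePlaceMk_eq]
  rcases w.isReal_or_isComplex with hw | hw
  · rw [InfinitePlace.conjugate_embedding_eq_of_isReal hw, Finset.pair_eq_singleton,
      Finset.prod_singleton, ← InfinitePlace.embedding_of_isReal_apply hw]
    exact Complex.zero_lt_real.mpr (hx _)
  · have hne : w.embedding ≠ ComplexEmbedding.conjugate w.embedding := by
      rw [InfinitePlace.isComplex_iff] at hw
      exact fun h ↦ hw h.symm
    rw [Finset.prod_pair hne, ComplexEmbedding.conjugate_coe_eq, Complex.mul_conj]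
    exact Complex.zero_lt_real.mpr (Complex.normSq_pos.mpr ((_root_.map_ne_zero _).mpr hx₀))

theorem norm_pos_of_forall_pos (hx₀ : x ≠ 0) (hx : ∀ φ : F →+* ℝ, 0 < φ x) :
    0 < Algebra.norm ℚ x := by
  classical
  have hnorm : ((Algebra.norm ℚ x : ℚ) : ℂ) = ∏ φ : F →+* ℂ, φ x := by
    rw [← eq_ratCast (algebraMap ℚ ℂ), Algebra.norm_eq_prod_embeddings ℚ ℂ x]
    exact (Fintype.prod_equiv (RingHom.equivRatAlgHom F ℂ) _ _ fun _ ↦ rfl).symm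
  have hpos : (0 : ℂ) < (Algebra.norm ℚ x : ℚ) := by
    rw [hnorm, ← Finset.prod_fiberwise Finset.univ InfinitePlace.mk]
    exact Finset.prod_pos fun w _ ↦ prod_filter_infinitePlaceMk_eq_pos hx₀ hx w
  rw [← Complex.ofReal_ratCast, Complex.zero_lt_real] at hpos
  exact_mod_cast hpos

end Norm

section HPlus

theorem totPosUnits_eq_ker_realSigns (F : Type) [Field F] : totPosUnits F = (realSigns F).ker := by
  ext x
  exact mem_ker_realSigns.symm

theorem index_totPosUnits : (totPosUnits K).index = 2 ^ InfinitePlace.nrRealPlaces K := by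
  rw [totPosUnits_eq_ker_realSigns, index_ker_realSigns]

theorem sq_mem_totPosUnits {F : Type} [Field F] (x : Fˣ) : x ^ 2 ∈ totPosUnits F := by
  intro φ
  rw [Units.val_pow_eq_pow_val, map_pow]
  exact sq_pos_of_ne_zero ((_root_.map_ne_zero φ).mpr x.ne_zero)

theorem HPairs_inf_comap_totPosUnits :
    HPairs K O ⊓ (totPosUnits K).comap (MonoidHom.snd _ _) =
      powPairs (toPrincipalIdeal O K) (totPosUnits K) 2 := by
  ext p
  exact ⟨fun ⟨⟨hp, _⟩, hpos⟩ ↦ ⟨hp, hpos⟩,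
    fun ⟨hp, hpos⟩ ↦ ⟨⟨hp, norm_pos_of_forall_pos p.2.ne_zero hpos⟩, hpos⟩⟩

theorem card_HPlus_eq_relIndex :
    Nat.card (HPlus K O) =
      (EqvPairs K O).relIndex (powPairs (toPrincipalIdeal O K) (totPosUnits K) 2) := by
  unfold HPlus
  rw [← Subgroup.relIndex_ker, QuotientGroup.ker_mk', ← HPairs_inf_comap_totPosUnits,
    ← Subgroup.relIndex_subgroupOf (H := EqvPairs K O) (L := HPairs K O) inf_le_left,
    Subgroup.inf_subgroupOf_left]
  rfl

theorem card_HPlus_eq_general [Module.Finite ℤ O] :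
    Nat.card (HPlus K O) = 2 ^ InfinitePlace.nrComplexPlaces K *
      Nat.card {c : NarrowClassGroupOrd K O // c ^ 2 = 1} := by
  have hpairs := relIndex_range_powPairs_mul_index (f := toPrincipalIdeal O K) sq_mem_totPosUnits
  rw [index_totPosUnits, relIndex_map_powMonoidHom_ker_toPrincipalIdeal,
    InfinitePlace.card_eq_nrRealPlaces_add_nrComplexPlaces, pow_add] at hpairs
  refine Nat.eq_of_mul_eq_mul_right (Nat.two_pow_pos (InfinitePlace.nrRealPlaces K)) ?_
  rw [card_HPlus_eq_relIndex, mul_right_comm, mul_comm (2 ^ InfinitePlace.nrComplexPlaces K)]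
  exact hpairs

end HPlus

/-- **The order of `H⁺(O)`.** For an order `O` in a degree `n` number field `K` of signature
`(r1, r2)`, with `n ≥ 3` odd, one has `#H⁺(O) = 2^(r2) · #Cl₂⁺(O)`. -/
theorem card_HPlus_eq (n r1 r2 : ℕ) (hodd : Odd n) (hn : 3 ≤ n)
    (hdeg : Module.finrank ℚ K = n)
    (hr1 : Nat.card {w : InfinitePlace K // w.IsReal} = r1)
    (hr2 : Nat.card {w : InfinitePlace K // w.IsComplex} = r2)
    [Module.Finite ℤ O] :
    Nat.card (HPlus K O) =
      2 ^ r2 * Nat.card {c : NarrowClassGroupOrd K O // c ^ 2 = 1} := by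
  classical
  rw [card_HPlus_eq_general, InfinitePlace.nrComplexPlaces, ← Nat.card_eq_fintype_card, hr2]
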